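/- arXiv:2511.18460 — 9 statements merged into one kernel-verified Lean document; each statement's English description precedes it below -/
import Mathlib

section
/- Let 𝒜₁, …, 𝒜ₘ be finite collections of pairwise disjoint nonempty subsets of a finite set V and let w₁, …, wₘ be nonnegative reals. Then the function gain(𝒮) := Σ_{i=1}^{m} wᵢ · (|𝒜ᵢ| − |𝒜ᵢ/𝒮|), defined on finite collections 𝒮 of subsets of V, is submodular; that is, for all collections 𝒮₁ ⊆ 𝒮₂ of subsets of V and every subset S ⊆ V, gain(𝒮₁ ∪ {S}) − gain(𝒮₁) ≥ gain(𝒮₂ ∪ {S}) − gain(𝒮₂). -/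
/-!
The summands are handled one at a time: each has a nonnegative weight, so it is enough to compare
the drop in the number of blocks of a single collection `𝒜` when `S` is added.

Adding `S` to `𝒮` merges exactly the blocks of `𝒜/𝒮` that contain a member meeting `S`
(`sameBlock_insert_iff`) and leaves the other blocks alone. So if `k` blocks are touched by `S`,
the number of blocks drops by `k - 1`, or by `0` if `k = 0` (`numBlocks_insert`). Whether `k = 0`
depends only on `𝒜` and `S`, while `k` itself can only decrease when `𝒮` grows, since the
partition then gets coarser (`card_touched_le`).
-/

variable {V : Type*}

/-- Two members `A`, `B` of the collection `𝒜` are directly related if both belong to `𝒜`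
and some `S ∈ 𝒮` intersects both. -/
def stepRel [DecidableEq V] (𝒜 𝒮 : Finset (Finset V)) (A B : Finset V) : Prop :=
  A ∈ 𝒜 ∧ B ∈ 𝒜 ∧ ∃ S ∈ 𝒮, (A ∩ S).Nonempty ∧ (B ∩ S).Nonempty

/-- The finest equivalence relation on the members of `𝒜` in which `A`, `A'` are related
whenever some `S ∈ 𝒮` intersects both (realized as the reflexive-transitive closure of the
symmetric relation `stepRel`). -/
def sameBlock [DecidableEq V] (𝒜 𝒮 : Finset (Finset V)) : Finset V → Finset V → Prop :=
  Relation.ReflTransGen (stepRel 𝒜 𝒮)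

open Classical in
/-- The number of blocks of the partition `𝒜/𝒮`: the number of distinct equivalence
classes of members of `𝒜`. -/
noncomputable def numBlocks [DecidableEq V] (𝒜 𝒮 : Finset (Finset V)) : ℕ :=
  (𝒜.image fun A => 𝒜.filter (sameBlock 𝒜 𝒮 A)).card

section Blocks

variable [DecidableEq V] {𝒜 𝒮 𝒮₁ 𝒮₂ : Finset (Finset V)} {S A B C : Finset V}

lemma sameBlock_symm (h : sameBlock 𝒜 𝒮 A B) : sameBlock 𝒜 𝒮 B A := by
  unfold sameBlock at *
  induction h with
  | refl => exact .refl
  | tail _ hs ih =>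
    obtain ⟨h1, h2, S, hS, h3, h4⟩ := hs
    exact .head ⟨h2, h1, S, hS, h4, h3⟩ ih

lemma sameBlock_trans (h : sameBlock 𝒜 𝒮 A B) (h' : sameBlock 𝒜 𝒮 B C) :
    sameBlock 𝒜 𝒮 A C :=
  Relation.ReflTransGen.trans h h'

lemma sameBlock_mono (hsub : 𝒮₁ ⊆ 𝒮₂) (h : sameBlock 𝒜 𝒮₁ A B) : sameBlock 𝒜 𝒮₂ A B :=
  Relation.ReflTransGen.mono
    (fun _ _ ⟨h1, h2, S, hS, h3⟩ => ⟨h1, h2, S, hsub hS, h3⟩) _ _ h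

/-- The members of `𝒜` that intersect `S`. -/
def meeting (𝒜 : Finset (Finset V)) (S : Finset V) : Finset (Finset V) :=
  𝒜.filter fun A => (A ∩ S).Nonempty

lemma sameBlock_insert_of_meeting (hA : A ∈ meeting 𝒜 S) (hB : B ∈ meeting 𝒜 S) :
    sameBlock 𝒜 (insert S 𝒮) A B := by
  rw [meeting, Finset.mem_filter] at hA hB
  exact .single ⟨hA.1, hB.1, S, Finset.mem_insert_self _ _, hA.2, hB.2⟩

/-- Adding `S` merges the blocks touched by `S` into one and changes nothing else. -/
lemma sameBlock_insert_iff :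
    sameBlock 𝒜 (insert S 𝒮) A B ↔ sameBlock 𝒜 𝒮 A B ∨
      ((∃ C ∈ meeting 𝒜 S, sameBlock 𝒜 𝒮 A C) ∧ ∃ D ∈ meeting 𝒜 S, sameBlock 𝒜 𝒮 B D) := by
  constructor
  · intro h
    unfold sameBlock at h
    induction h with
    | refl => exact .inl .refl
    | @tail X Y _ hs ih =>
      obtain ⟨hX, hY, R, hR, hXR, hYR⟩ := hs
      rcases Finset.mem_insert.1 hR with rfl | hR
      · have hX' : X ∈ meeting 𝒜 R := Finset.mem_filter.2 ⟨hX, hXR⟩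
        have hY' : Y ∈ meeting 𝒜 R := Finset.mem_filter.2 ⟨hY, hYR⟩
        refine .inr ⟨?_, Y, hY', .refl⟩
        rcases ih with ih | ih
        · exact ⟨X, hX', ih⟩
        · exact ih.1
      · have hYX : sameBlock 𝒜 𝒮 Y X := .single ⟨hY, hX, R, hR, hYR, hXR⟩
        rcases ih with ih | ⟨h1, D, hD, h2⟩
        · exact .inl (sameBlock_trans ih (sameBlock_symm hYX))
        · exact .inr ⟨h1, D, hD, sameBlock_trans hYX h2⟩
  · have hsub : 𝒮 ⊆ insert S 𝒮 := Finset.subset_insert _ _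
    rintro (h | ⟨⟨C, hC, h1⟩, D, hD, h2⟩)
    · exact sameBlock_mono hsub h
    · exact sameBlock_trans (sameBlock_mono hsub h1)
        (sameBlock_trans (sameBlock_insert_of_meeting hC hD)
          (sameBlock_symm (sameBlock_mono hsub h2)))

open Classical in
/-- The block of `A` in the partition `𝒜/𝒮`, for `A ∈ 𝒜`. -/
noncomputable def block (𝒜 𝒮 : Finset (Finset V)) (A : Finset V) : Finset (Finset V) :=
  𝒜.filter (sameBlock 𝒜 𝒮 A)

lemma mem_block : B ∈ block 𝒜 𝒮 A ↔ B ∈ 𝒜 ∧ sameBlock 𝒜 𝒮 A B := by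
  simp [block]

lemma block_eq_of_sameBlock (h : sameBlock 𝒜 𝒮 A B) : block 𝒜 𝒮 A = block 𝒜 𝒮 B := by
  ext C
  rw [mem_block, mem_block]
  exact and_congr_right fun _ =>
    ⟨fun h' => sameBlock_trans (sameBlock_symm h) h', fun h' => sameBlock_trans h h'⟩

lemma sameBlock_of_block_eq (hB : B ∈ 𝒜) (h : block 𝒜 𝒮 A = block 𝒜 𝒮 B) :
    sameBlock 𝒜 𝒮 A B := by
  have : B ∈ block 𝒜 𝒮 B := mem_block.2 ⟨hB, .refl⟩
  exact (mem_block.1 (h ▸ this)).2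

open Classical in
/-- The blocks of `𝒜/𝒮` that contain a member of `𝒜` intersecting `S`. -/
noncomputable def touched (𝒜 𝒮 : Finset (Finset V)) (S : Finset V) :
    Finset (Finset (Finset V)) :=
  (meeting 𝒜 S).image (block 𝒜 𝒮)

open Classical in
/-- Both sides count the blocks of `𝒜/𝒮` that `S` does not touch, plus the touched blocks of
`𝒜/𝒮` and the single block (if any) of `𝒜/(𝒮 ∪ {S})` into which these merge. -/
lemma numBlocks_insert (𝒜 𝒮 : Finset (Finset V)) (S : Finset V) :
    numBlocks 𝒜 (insert S 𝒮) + (touched 𝒜 𝒮 S).card =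
      numBlocks 𝒜 𝒮 + if (meeting 𝒜 S).Nonempty then 1 else 0 := by
  set p : Finset V → Prop := fun A => ∃ C ∈ meeting 𝒜 S, sameBlock 𝒜 𝒮 A C with hp
  have hmeet : ∀ C ∈ meeting 𝒜 S, C ∈ 𝒜 := fun C hC => (Finset.mem_filter.1 hC).1
  have hsub : 𝒮 ⊆ insert S 𝒮 := Finset.subset_insert _ _
  -- For `𝒯 = 𝒮` and `𝒯 = 𝒮 ∪ {S}`, the members related to `meeting 𝒜 S` are the same, namely
  -- those satisfying `p`; their blocks are counted apart from the others.
  have split : ∀ 𝒯, (∀ A, ∀ C ∈ meeting 𝒜 S, sameBlock 𝒜 𝒯 A C → p A) → 𝒮 ⊆ 𝒯 →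
      numBlocks 𝒜 𝒯 = ((𝒜.filter fun A => ¬ p A).image (block 𝒜 𝒯)).card +
        ((meeting 𝒜 S).image (block 𝒜 𝒯)).card := by
    intro 𝒯 h𝒯 hle
    rw [← Finset.card_union_of_disjoint]
    · change (𝒜.image (block 𝒜 𝒯)).card = _
      congr 1
      ext X
      simp only [Finset.mem_union, Finset.mem_image, Finset.mem_filter]
      constructor
      · rintro ⟨A, hA, rfl⟩
        by_cases hpA : p A
        · obtain ⟨C, hC, h⟩ := hpA
          exact .inr ⟨C, hC, (block_eq_of_sameBlock (sameBlock_mono hle h)).symm⟩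
        · exact .inl ⟨A, ⟨hA, hpA⟩, rfl⟩
      · rintro (⟨A, hA, rfl⟩ | ⟨A, hA, rfl⟩)
        · exact ⟨A, hA.1, rfl⟩
        · exact ⟨A, hmeet A hA, rfl⟩
    · rw [Finset.disjoint_left]
      intro X h1 h2
      obtain ⟨A, hA, rfl⟩ := Finset.mem_image.1 h1
      obtain ⟨C, hC, h⟩ := Finset.mem_image.1 h2
      exact (Finset.mem_filter.1 hA).2 (h𝒯 A C hC (sameBlock_of_block_eq (hmeet C hC) h.symm))
  have h0 := split 𝒮 (fun A C hC h => ⟨C, hC, h⟩) subset_rfl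
  have h1 := split (insert S 𝒮) (fun A C hC h => by
    rcases sameBlock_insert_iff.1 h with h | h
    · exact ⟨C, hC, h⟩
    · exact h.1) hsub
  have huntouched : (𝒜.filter fun A => ¬ p A).image (block 𝒜 (insert S 𝒮)) =
      (𝒜.filter fun A => ¬ p A).image (block 𝒜 𝒮) := by
    refine Finset.image_congr fun A hA => ?_
    have hpA : ¬ p A := (Finset.mem_filter.1 hA).2
    ext B
    rw [mem_block, mem_block, sameBlock_insert_iff]
    exact and_congr_right fun _ => ⟨fun h => h.resolve_right fun h => hpA h.1, .inl⟩
  have hmerged : ((meeting 𝒜 S).image (block 𝒜 (insert S 𝒮))).card =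
      if (meeting 𝒜 S).Nonempty then 1 else 0 := by
    split_ifs with hT
    · obtain ⟨C, hC⟩ := hT
      rw [Finset.card_eq_one]
      refine ⟨block 𝒜 (insert S 𝒮) C, ?_⟩
      refine Finset.eq_singleton_iff_unique_mem.2 ⟨Finset.mem_image_of_mem _ hC, ?_⟩
      intro X hX
      obtain ⟨D, hD, rfl⟩ := Finset.mem_image.1 hX
      exact block_eq_of_sameBlock (sameBlock_insert_of_meeting hD hC)
    · rw [Finset.not_nonempty_iff_eq_empty.1 hT]; simp
  rw [h0, h1, huntouched, hmerged, touched]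
  omega

open Classical in
/-- The partition by a larger family is coarser, so `S` touches fewer of its blocks. -/
lemma card_touched_le (hsub : 𝒮₁ ⊆ 𝒮₂) :
    (touched 𝒜 𝒮₂ S).card ≤ (touched 𝒜 𝒮₁ S).card := by
  -- Sending a block of `𝒜/𝒮₁` to the block of `𝒜/𝒮₂` containing it is onto the touched blocks.
  let g : Finset (Finset V) → Finset (Finset V) := fun X => X.biUnion (block 𝒜 𝒮₂)
  have hg : touched 𝒜 𝒮₂ S = (touched 𝒜 𝒮₁ S).image g := by
    rw [touched, touched, Finset.image_image]
    refine Finset.image_congr fun A hA => ?_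
    have hA' : A ∈ 𝒜 := (Finset.mem_filter.1 hA).1
    ext B
    simp only [g, Function.comp, Finset.mem_biUnion]
    constructor
    · exact fun h => ⟨A, mem_block.2 ⟨hA', .refl⟩, h⟩
    · rintro ⟨C, hC, hB⟩
      rwa [block_eq_of_sameBlock (sameBlock_mono hsub (mem_block.1 hC).2)]
  rw [hg]
  exact Finset.card_image_le

end Blocks

/-- the gain function `𝒮 ↦ ∑ i, wᵢ · (|𝒜ᵢ| − |𝒜ᵢ/𝒮|)` is submodular. -/
theorem gain_submodular [Fintype V] [DecidableEq V] {m : ℕ}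
    (𝒜 : Fin m → Finset (Finset V)) (w : Fin m → ℝ) (hw : ∀ i, 0 ≤ w i)
    (hne : ∀ i, ∀ A ∈ 𝒜 i, A.Nonempty)
    (hdisj : ∀ i, ∀ A ∈ 𝒜 i, ∀ B ∈ 𝒜 i, A ≠ B → Disjoint A B)
    (gain : Finset (Finset V) → ℝ)
    (hgain : ∀ 𝒮 : Finset (Finset V),
      gain 𝒮 = ∑ i, w i * (((𝒜 i).card : ℝ) - (numBlocks (𝒜 i) 𝒮 : ℝ)))
    (𝒮₁ 𝒮₂ : Finset (Finset V)) (hsub : 𝒮₁ ⊆ 𝒮₂) (S : Finset V) :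
    gain (insert S 𝒮₂) - gain 𝒮₂ ≤ gain (insert S 𝒮₁) - gain 𝒮₁ := by
  rw [hgain, hgain, hgain, hgain, ← Finset.sum_sub_distrib, ← Finset.sum_sub_distrib]
  refine Finset.sum_le_sum fun i _ => ?_
  rw [← mul_sub, ← mul_sub]
  refine mul_le_mul_of_nonneg_left ?_ (hw i)
  have h1 := numBlocks_insert (𝒜 i) 𝒮₁ S
  have h2 := numBlocks_insert (𝒜 i) 𝒮₂ S
  have h3 := card_touched_le (𝒜 := 𝒜 i) (S := S) hsub
  have h4 : numBlocks (𝒜 i) (insert S 𝒮₁) + numBlocks (𝒜 i) 𝒮₂ ≤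
      numBlocks (𝒜 i) (insert S 𝒮₂) + numBlocks (𝒜 i) 𝒮₁ := by omega
  have h5 : (numBlocks (𝒜 i) (insert S 𝒮₁) : ℝ) + numBlocks (𝒜 i) 𝒮₂ ≤
      numBlocks (𝒜 i) (insert S 𝒮₂) + numBlocks (𝒜 i) 𝒮₁ := by exact_mod_cast h4
  linarith
end

section
/- Let P and Q be autarkic tuples such that for every set A of P and every set B of Q, either A ⊆ B or A ∩ B = ∅. Then P ⊆ Q or P ∩ Q = ∅. (This captures the laminarity of autarkic tuples: in the moat-growing process, any set active at an earlier time is contained in or disjoint from any set active at a later time, so for any two autarkic tuples P and Q one of P ⊆ Q, Q ⊆ P, or P ∩ Q = ∅ holds.) -/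
/-!
For a tuple `P` let `⋃ P` be the union of its sets. No demand pair leaves `⋃ P`
(`IsAutarkicTuple.exists_mem_of_mem`): this is the definition for a triple, and for a pair
it holds because a demand leaving one set must enter the other. On the other hand, some demand
leaves each single set of `P`, and hence ends in another set of `P`
(`IsAutarkicTuple.exists_neighbor`).

By laminarity each set of `P` is contained in a set of `Q` or disjoint from all of them. Two sets
of `P` joined by a demand are of the same kind, as that demand does not leave `⋃ Q`. So if both
kinds occur, each of them occurs at least twice, but `P` has at most three sets.
-/

variable {V : Type*}

/-- The set of demand pairs in `𝒟` separated by `U`: pairs with exactly one endpoint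
in `U`. -/
def sep [DecidableEq V] (𝒟 : Finset (Finset V)) (U : Finset V) : Finset (Finset V) :=
  𝒟.filter fun d => (d ∩ U).card = 1

/-- `P = {A₁, A₂}` is an autarkic pair: two disjoint subsets with
`sep A₁ = sep A₂ ≠ ∅`. -/
def IsAutarkicPair [DecidableEq V] (𝒟 : Finset (Finset V)) (P : Finset (Finset V)) : Prop :=
  ∃ A₁ A₂ : Finset V, P = {A₁, A₂} ∧ A₁ ≠ A₂ ∧ Disjoint A₁ A₂ ∧
    sep 𝒟 A₁ = sep 𝒟 A₂ ∧ sep 𝒟 A₁ ≠ ∅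

/-- `P = {A₁, A₂, A₃}` is an autarkic triple: three pairwise disjoint subsets with
`sep Aᵢ ≠ ∅` for each `i` and `sep (A₁ ∪ A₂ ∪ A₃) = ∅`. -/
def IsAutarkicTriple [DecidableEq V] (𝒟 : Finset (Finset V)) (P : Finset (Finset V)) : Prop :=
  ∃ A₁ A₂ A₃ : Finset V, P = {A₁, A₂, A₃} ∧ A₁ ≠ A₂ ∧ A₁ ≠ A₃ ∧ A₂ ≠ A₃ ∧
    Disjoint A₁ A₂ ∧ Disjoint A₁ A₃ ∧ Disjoint A₂ A₃ ∧
    sep 𝒟 A₁ ≠ ∅ ∧ sep 𝒟 A₂ ≠ ∅ ∧ sep 𝒟 A₃ ≠ ∅ ∧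
    sep 𝒟 (A₁ ∪ A₂ ∪ A₃) = ∅

/-- An autarkic tuple is an autarkic pair or an autarkic triple. -/
def IsAutarkicTuple [DecidableEq V] (𝒟 : Finset (Finset V)) (P : Finset (Finset V)) : Prop :=
  IsAutarkicPair 𝒟 P ∨ IsAutarkicTriple 𝒟 P

/-- A demand `{x, y}` is separated by `U` iff exactly one of `x`, `y` lies in `U`. -/
theorem pair_mem_sep [DecidableEq V] {𝒟 : Finset (Finset V)} {U : Finset V} {x y : V}
    (hxy : x ≠ y) :
    {x, y} ∈ sep 𝒟 U ↔ {x, y} ∈ 𝒟 ∧ ¬(x ∈ U ↔ y ∈ U) := by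
  unfold sep
  rw [Finset.mem_filter]
  by_cases hx : x ∈ U <;> by_cases hy : y ∈ U <;>
    simp [Finset.insert_inter_of_mem, Finset.insert_inter_of_notMem,
      Finset.singleton_inter_of_mem, Finset.singleton_inter_of_notMem, hx, hy, hxy]

theorem exists_leaving_of_sep_ne_empty [DecidableEq V] {𝒟 : Finset (Finset V)}
    (hD : ∀ d ∈ 𝒟, d.card = 2) {U : Finset V} (hU : sep 𝒟 U ≠ ∅) :
    ∃ x ∈ U, ∃ y ∉ U, {x, y} ∈ 𝒟 := by
  obtain ⟨d, hd⟩ := Finset.nonempty_iff_ne_empty.mpr hU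
  obtain ⟨a, b, hab, rfl⟩ := Finset.card_eq_two.mp (hD d (Finset.mem_filter.mp hd).1)
  obtain ⟨hd, hsep⟩ := (pair_mem_sep hab).mp hd
  by_cases ha : a ∈ U
  · exact ⟨a, ha, b, by tauto, hd⟩
  · exact ⟨b, by tauto, a, ha, by rwa [Finset.pair_comm]⟩

theorem IsAutarkicTuple.card_le [DecidableEq V] {𝒟 P : Finset (Finset V)}
    (hP : IsAutarkicTuple 𝒟 P) : P.card ≤ 3 := by
  rcases hP with ⟨A₁, A₂, rfl, -⟩ | ⟨A₁, A₂, A₃, rfl, -⟩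
  · exact Finset.card_le_two.trans (by norm_num)
  · exact Finset.card_le_three

theorem IsAutarkicTuple.exists_leaving [DecidableEq V] {𝒟 P : Finset (Finset V)}
    (hD : ∀ d ∈ 𝒟, d.card = 2) (hP : IsAutarkicTuple 𝒟 P) {A : Finset V} (hA : A ∈ P) :
    ∃ x ∈ A, ∃ y ∉ A, {x, y} ∈ 𝒟 := by
  apply exists_leaving_of_sep_ne_empty hD
  rcases hP with ⟨A₁, A₂, rfl, -, -, heq, hne⟩ | ⟨A₁, A₂, A₃, rfl, -, -, -, -, -, -, h₁, h₂, h₃, -⟩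
  · simp only [Finset.mem_insert, Finset.mem_singleton] at hA
    rcases hA with rfl | rfl
    · exact hne
    · exact heq ▸ hne
  · simp only [Finset.mem_insert, Finset.mem_singleton] at hA
    rcases hA with rfl | rfl | rfl <;> assumption

/-- No demand pair leaves the union of the sets of an autarkic tuple. -/
theorem IsAutarkicTuple.exists_mem_of_mem [DecidableEq V] {𝒟 P : Finset (Finset V)}
    (hP : IsAutarkicTuple 𝒟 P) {x y : V} (hxy : {x, y} ∈ 𝒟)
    (hx : ∃ A ∈ P, x ∈ A) : ∃ A ∈ P, y ∈ A := by
  rcases eq_or_ne x y with rfl | hne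
  · exact hx
  rcases hP with ⟨A₁, A₂, rfl, -, hdisj, heq, -⟩ | ⟨A₁, A₂, A₃, rfl, -, -, -, -, -, -, -, -, -, hU⟩
  · have h : {x, y} ∈ sep 𝒟 A₁ ↔ {x, y} ∈ sep 𝒟 A₂ := by rw [heq]
    rw [pair_mem_sep hne, pair_mem_sep hne] at h
    have h' : x ∈ A₁ → x ∉ A₂ := fun h₁ h₂ => Finset.disjoint_left.mp hdisj h₁ h₂
    simp only [Finset.mem_insert, Finset.mem_singleton, exists_eq_or_imp, exists_eq_left] at hx ⊢
    tauto
  · have h : {x, y} ∉ sep 𝒟 (A₁ ∪ A₂ ∪ A₃) := by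
      rw [hU]
      exact Finset.notMem_empty _
    rw [pair_mem_sep hne] at h
    simp only [Finset.mem_union] at h
    simp only [Finset.mem_insert, Finset.mem_singleton, exists_eq_or_imp, exists_eq_left] at hx ⊢
    tauto

/-- Each set of `P` is joined by a demand to another set of `P`. -/
theorem IsAutarkicTuple.exists_neighbor [DecidableEq V] {𝒟 P : Finset (Finset V)}
    (hD : ∀ d ∈ 𝒟, d.card = 2) (hP : IsAutarkicTuple 𝒟 P) {A : Finset V} (hA : A ∈ P) :
    ∃ A' ∈ P, A ≠ A' ∧ ∃ x ∈ A, ∃ y ∈ A', {x, y} ∈ 𝒟 := by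
  obtain ⟨x, hx, y, hy, hd⟩ := hP.exists_leaving hD hA
  obtain ⟨A', hA', hy'⟩ := hP.exists_mem_of_mem hd ⟨A, hA, hx⟩
  exact ⟨A', hA', fun h => hy (h ▸ hy'), x, hx, y, hy', hd⟩

/-- if each set of the autarkic tuple `P` is contained in or disjoint from
each set of the autarkic tuple `Q`, then `P ⊆ Q` or `P ∩ Q = ∅`. -/
theorem autarkic_laminar [DecidableEq V]
    (𝒟 : Finset (Finset V)) (hD : ∀ d ∈ 𝒟, d.card = 2)
    (P Q : Finset (Finset V))
    (hP : IsAutarkicTuple 𝒟 P) (hQ : IsAutarkicTuple 𝒟 Q)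
    (hlam : ∀ A ∈ P, ∀ B ∈ Q, A ⊆ B ∨ Disjoint A B) :
    (∀ A ∈ P, ∃ B ∈ Q, A ⊆ B) ∨ (∀ A ∈ P, ∀ B ∈ Q, Disjoint A B) := by
  -- A demand joining two sets of `P` carries containment in a set of `Q` from one to the other.
  have step : ∀ A A' : Finset V, A' ∈ P → ∀ x ∈ A, ∀ y ∈ A', {x, y} ∈ 𝒟 →
      (∃ B ∈ Q, A ⊆ B) → ∃ B ∈ Q, A' ⊆ B := by
    rintro A A' hA' x hx y hy hd ⟨B, hB, hAB⟩
    obtain ⟨B', hB', hyB'⟩ := hQ.exists_mem_of_mem hd ⟨B, hB, hAB hx⟩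
    exact ⟨B', hB', (hlam A' hA' B' hB').resolve_right
      fun h => Finset.disjoint_left.mp h hy hyB'⟩
  by_contra! hcon
  obtain ⟨⟨C, hC, hCout⟩, A, hA, B, hB, hAB⟩ := hcon
  have hAin : ∃ B ∈ Q, A ⊆ B := ⟨B, hB, (hlam A hA B hB).resolve_right hAB⟩
  have hCout' : ¬∃ B ∈ Q, C ⊆ B := by
    rintro ⟨B', hB', h⟩
    exact hCout B' hB' h
  obtain ⟨A', hA', hAA', x, hx, y, hy, hxy⟩ := hP.exists_neighbor hD hA
  obtain ⟨C', hC', hCC', z, hz, w, hw, hzw⟩ := hP.exists_neighbor hD hC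
  have hA'in : ∃ B ∈ Q, A' ⊆ B := step A A' hA' x hx y hy hxy hAin
  have hC'out : ¬∃ B ∈ Q, C' ⊆ B := fun h =>
    hCout' (step C' C hC w hw z hz (by rwa [Finset.pair_comm]) h)
  have hne : ∀ {S T : Finset V}, (∃ B ∈ Q, S ⊆ B) → (¬∃ B ∈ Q, T ⊆ B) → S ≠ T := by
    rintro S T hS hT rfl
    exact hT hS
  have hcard : ({A, A', C, C'} : Finset (Finset V)).card = 4 := by
    simp [hAA', hCC', hne hAin hCout', hne hAin hC'out, hne hA'in hCout', hne hA'in hC'out]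
  have hsub : ({A, A', C, C'} : Finset (Finset V)) ⊆ P := by
    simp [Finset.insert_subset_iff, hA, hA', hC, hC']
  have h₁ := Finset.card_le_card hsub
  have h₂ := hP.card_le
  omega
end

section
/- Let P₁, P₂, P₃ be autarkic tuples with P₁ ⊆ P₂ ⊆ P₃, and suppose sep(P₁) ∩ sep(P₃) ≠ ∅. Then sep(P₂) ∩ sep(P₃) ≠ ∅. -/
/-!
A demand pair `d` separated by some set of `P₃` cannot lie inside a set of `P₃`, because the sets
of `P₃` are pairwise disjoint and `d` has two elements (`IsAutarkicTuple.not_subset_of_mem_sepT`).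
If `d` is also separated by `A ∈ P₁`, choose `A ⊆ B ⊆ C` with `B ∈ P₂` and `C ∈ P₃`: then `B`
meets `d` because `A` does, and `B` does not contain `d` because `C` does not. So `B` separates
`d`, and the same `d` witnesses the conclusion.
-/

variable {V : Type*}

/-- `sep P` for an autarkic tuple `P`: the union of `sep A` over the sets `A` of `P`. -/
def sepT [DecidableEq V] (𝒟 : Finset (Finset V)) (P : Finset (Finset V)) :
    Finset (Finset V) :=
  P.biUnion (sep 𝒟)

lemma IsAutarkicTuple.disjoint_of_ne [DecidableEq V] {𝒟 P : Finset (Finset V)}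
    (h : IsAutarkicTuple 𝒟 P) {A B : Finset V} (hA : A ∈ P) (hB : B ∈ P) (hAB : A ≠ B) :
    Disjoint A B := by
  rcases h with ⟨A₁, A₂, rfl, -, h₁₂, -⟩ | ⟨A₁, A₂, A₃, rfl, -, -, -, h₁₂, h₁₃, h₂₃, -⟩
  · simp only [Finset.mem_insert, Finset.mem_singleton] at hA hB
    rcases hA with rfl | rfl <;> rcases hB with rfl | rfl <;>
      first | exact absurd rfl hAB | assumption | (apply Disjoint.symm; assumption)
  · simp only [Finset.mem_insert, Finset.mem_singleton] at hA hB
    rcases hA with rfl | rfl | rfl <;> rcases hB with rfl | rfl | rfl <;>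
      first | exact absurd rfl hAB | assumption | (apply Disjoint.symm; assumption)

lemma IsAutarkicTuple.not_subset_of_mem_sepT [DecidableEq V] {𝒟 P : Finset (Finset V)}
    (hD : ∀ d ∈ 𝒟, d.card = 2) (h : IsAutarkicTuple 𝒟 P) {d C : Finset V}
    (hd : d ∈ sepT 𝒟 P) (hC : C ∈ P) : ¬ d ⊆ C := by
  intro hdC
  simp only [sepT, Finset.mem_biUnion, sep, Finset.mem_filter] at hd
  obtain ⟨C', hC', hd𝒟, hcard⟩ := hd
  have hd2 := hD d hd𝒟
  by_cases hne : C = C'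
  · subst hne
    rw [Finset.inter_eq_left.mpr hdC] at hcard
    omega
  · have hdisj : Disjoint d C' := (h.disjoint_of_ne hC hC' hne).mono_left hdC
    rw [Finset.disjoint_iff_inter_eq_empty.mp hdisj] at hcard
    simp at hcard

/-- for autarkic tuples `P₁ ⊆ P₂ ⊆ P₃`, if `sep P₁ ∩ sep P₃ ≠ ∅` then
`sep P₂ ∩ sep P₃ ≠ ∅`. -/
theorem autarkic_crossing_monotone [DecidableEq V]
    (𝒟 : Finset (Finset V)) (hD : ∀ d ∈ 𝒟, d.card = 2)
    (P₁ P₂ P₃ : Finset (Finset V))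
    (h₁ : IsAutarkicTuple 𝒟 P₁) (h₂ : IsAutarkicTuple 𝒟 P₂) (h₃ : IsAutarkicTuple 𝒟 P₃)
    (h₁₂ : ∀ A ∈ P₁, ∃ B ∈ P₂, A ⊆ B) (h₂₃ : ∀ A ∈ P₂, ∃ B ∈ P₃, A ⊆ B)
    (hne : sepT 𝒟 P₁ ∩ sepT 𝒟 P₃ ≠ ∅) :
    sepT 𝒟 P₂ ∩ sepT 𝒟 P₃ ≠ ∅ := by
  obtain ⟨d, hd⟩ := Finset.nonempty_iff_ne_empty.mpr hne
  obtain ⟨hd₁, hd₃⟩ := Finset.mem_inter.mp hd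
  refine Finset.nonempty_iff_ne_empty.mp ⟨d, Finset.mem_inter.mpr ⟨?_, hd₃⟩⟩
  simp only [sepT, Finset.mem_biUnion, sep, Finset.mem_filter] at hd₁ ⊢
  obtain ⟨A, hA, hd𝒟, hdA⟩ := hd₁
  obtain ⟨B, hB, hAB⟩ := h₁₂ A hA
  obtain ⟨C, hC, hBC⟩ := h₂₃ B hB
  refine ⟨B, hB, hd𝒟, ?_⟩
  have hlow : (d ∩ A).card ≤ (d ∩ B).card :=
    Finset.card_le_card (Finset.inter_subset_inter_left hAB)
  have hdB : ¬ d ⊆ B := fun hs =>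
    h₃.not_subset_of_mem_sepT hD hd₃ hC (hs.trans hBC)
  have hup : (d ∩ B).card < d.card :=
    Finset.card_lt_card ⟨Finset.inter_subset_left, fun hs =>
      hdB (hs.trans Finset.inter_subset_right)⟩
  have := hD d hd𝒟
  omega
end

section
/- Let y be dual feasible with laminar support, i.e., for any two subsets U, U' ⊆ V with y_U > 0 and y_{U'} > 0, either U ⊆ U', or U' ⊆ U, or U ∩ U' = ∅. Let 𝒫 be a finite crossing-free collection of autarkic tuples all of whose constituent sets A satisfy y_A > 0. Define coverage(𝒫) := Σ y_U, summed over all U ⊆ V that are covered by some tuple of 𝒫. For each tuple P ∈ 𝒫 and each pair of distinct sets A, A' of P with sep(A) ∩ sep(A') ≠ ∅, fix a designated representative demand pair {a, b} ∈ sep(A) ∩ sep(A'), and let K be the set of all these designated representative pairs, viewed as auxiliary edges on V. Then for every feasible Steiner forest F ⊆ E there exists D ⊆ F such that: (i) c(D) ≥ coverage(𝒫) − Σ_{U ⊆ V : |F ∩ δ(U)| ≥ 2} y_U, and (ii) for every demand pair {v, w} ∈ 𝒟, the vertices v and w lie in the same connected component of the graph on vertex set V with edge set (F \ D) ∪ K.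 Consequently c(F \ D) ≤ c(F) − coverage(𝒫) + Σ_{U ⊆ V : |F ∩ δ(U)| ≥ 2} y_U. -/
/-!
Let `D` consist of the edges `e ∈ F` such that `F ∩ δ(U) = {e}` for some covered set `U`.

*Cost.* A covered set separates some demand pair, so feasibility gives `|F ∩ δ(U)| ≥ 1`.
Hence a covered set with `|F ∩ δ(U)| < 2` is crossed by exactly one edge of `F`, which lies in
`D`, and summing the dual constraints over `D` bounds `c(D)` from below by the total `y`-value
of these sets (`sum_le_of_cut`).

*Connectivity.* Autarky and the crossing-free property imply that every demand pair `d` separated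
by some covered set has a representative pair `r ∈ K` such that exactly the same covered sets
separate `d` and `r` (`exists_rep`). Let `C` be a connected component of `(F \ D) ∪ K`. All edges
of `F ∩ δ(C)` lie in `D`; choosing for each such `e` a covered set `U_e` with `F ∩ δ(U_e) = {e}`,
the mod 2 sum of the indicators of `C` and of all the `U_e` is constant along every edge of `F`
(`parity_const`). Hence, mod 2, any pair joined by `F` is separated by `C` iff it is
separated by an odd number of the sets `U_e`. This number is the same for `d` and `r`, and `r` is
not separated by `C` because it is an edge of `K`; so `C` does not separate `d` either. If no
covered set separates `d`, the number is zero and the conclusion is the same.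
-/


open Finset

variable {V : Type*}

/-- A set `U` is covered by the autarkic tuple `P` if `sep A = sep U` for some set `A`
of `P`. -/
def Covers [DecidableEq V] (𝒟 : Finset (Finset V)) (P : Finset (Finset V))
    (U : Finset V) : Prop :=
  ∃ A ∈ P, sep 𝒟 A = sep 𝒟 U

/-- `e ∈ δ(U)`: the edge `e` has exactly one endpoint in `U`. -/
def inCut (U : Finset V) (e : Sym2 V) : Prop :=
  ∃ a b : V, e = s(a, b) ∧ a ∈ U ∧ b ∉ U

/-! ### Cuts and separated demand pairs -/

lemma inCut_mk (U : Finset V) (x z : V) : inCut U s(x, z) ↔ ¬(x ∈ U ↔ z ∈ U) := by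
  constructor
  · rintro ⟨a, b, h, ha, hb⟩
    rcases Sym2.eq_iff.1 h with ⟨rfl, rfl⟩ | ⟨rfl, rfl⟩ <;> tauto
  · intro h
    by_cases hx : x ∈ U
    · exact ⟨x, z, rfl, hx, by tauto⟩
    · exact ⟨z, x, Sym2.eq_swap, by tauto, hx⟩

lemma mem_sep_pair [DecidableEq V] {𝒟 : Finset (Finset V)} {U : Finset V} {x z : V}
    (hxz : x ≠ z) (hd : ({x, z} : Finset V) ∈ 𝒟) :
    ({x, z} : Finset V) ∈ sep 𝒟 U ↔ ¬(x ∈ U ↔ z ∈ U) := by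
  simp only [sep, mem_filter, hd, true_and]
  by_cases hx : x ∈ U <;> by_cases hz : z ∈ U <;>
    simp [insert_inter_of_mem, insert_inter_of_notMem, singleton_inter_of_mem,
      singleton_inter_of_notMem, hx, hz, hxz]

lemma ite_sub_ite_zmod_two (p q : Prop) [Decidable p] [Decidable q] :
    ((if p then 1 else 0) - (if q then 1 else 0) : ZMod 2) = if p ↔ q then 0 else 1 := by
  by_cases hp : p <;> by_cases hq : q <;> simp [hp, hq]

/-- A function constant along every edge of `S` is constant on the components of `S`. -/
lemma const_of_reachable {β : Type*} {S : Set (Sym2 V)} (f : V → β)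
    (hf : ∀ x z, s(x, z) ∈ S → f x = f z) {v w : V}
    (h : (SimpleGraph.fromEdgeSet S).Reachable v w) : f v = f w := by
  obtain ⟨p⟩ := h
  induction p with
  | nil => rfl
  | cons h _ ih => exact (hf _ _ ((SimpleGraph.fromEdgeSet_adj S).1 h).1).trans ih

/-! ### Connectivity by a parity argument -/

open Classical in
/-- If each `F`-edge leaving `C` lies in `D` and `F ∩ δ(U e) = {e}` for `e ∈ D`, then modulo 2
the indicator of `C` plus those of the `U e`, over the edges `e` of `D` leaving `C`, is constant
along every edge of `F`. -/
lemma parity_const {F D : Finset (Sym2 V)} (U : Sym2 V → Finset V)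
    (hU : ∀ e ∈ D, ∀ e' ∈ F, inCut (U e) e' ↔ e' = e) (C : Finset V)
    (hC : ∀ e ∈ F, inCut C e → e ∈ D) (x z : V) (hxz : s(x, z) ∈ F) :
    ((if x ∈ C then 1 else 0) + ∑ e ∈ D.filter (inCut C), if x ∈ U e then 1 else 0 : ZMod 2) =
      (if z ∈ C then 1 else 0) + ∑ e ∈ D.filter (inCut C), if z ∈ U e then 1 else 0 := by
  by_cases hc : inCut C s(x, z)
  · have hT : s(x, z) ∈ D.filter (inCut C) := mem_filter.2 ⟨hC _ hxz hc, hc⟩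
    rw [← add_sum_erase _ _ hT, ← add_sum_erase _ _ hT]
    have hrest : (∑ e ∈ (D.filter (inCut C)).erase s(x, z), if x ∈ U e then 1 else 0 : ZMod 2) =
        ∑ e ∈ (D.filter (inCut C)).erase s(x, z), if z ∈ U e then 1 else 0 := by
      refine sum_congr rfl fun e he => ?_
      obtain ⟨hne, he⟩ := mem_erase.1 he
      have h := (hU e (mem_filter.1 he).1 _ hxz).not.2 (Ne.symm hne)
      rw [inCut_mk, not_not] at h
      simp [h]
    rw [hrest, ← add_assoc, ← add_assoc]
    congr 1
    have h := (hU _ (hC _ hxz hc) _ hxz).2 rfl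
    rw [inCut_mk] at h hc
    by_cases h1 : x ∈ C <;> by_cases h2 : z ∈ C <;> by_cases h3 : x ∈ U s(x, z) <;>
      by_cases h4 : z ∈ U s(x, z) <;> simp_all <;> decide
  · congr 1
    · rw [inCut_mk, not_not] at hc
      simp [hc]
    · refine sum_congr rfl fun e he => ?_
      obtain ⟨heD, heC⟩ := mem_filter.1 he
      have h := (hU e heD _ hxz).not.2 (fun h => hc (h ▸ heC))
      rw [inCut_mk, not_not] at h
      simp [h]

open Classical in
/-- Suppose `F ∩ δ(U e) = {e}` for each `e ∈ D`. If `F` connects both pairs `{v, w}` and `{a, b}`,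
the same sets `U e` separate them, and `s(a, b)` lies in `K` (or `a = b`), then `v` and `w` are
connected in `(F \ D) ∪ K`: compare `{v, w}` and `{a, b}` through `parity_const` for the
component `C` of `v`. -/
lemma reachable_of_same [Fintype V] {F D : Finset (Sym2 V)} (K : Set (Sym2 V))
    (U : Sym2 V → Finset V) (hU : ∀ e ∈ D, ∀ e' ∈ F, inCut (U e) e' ↔ e' = e) {v w a b : V}
    (hvw : (SimpleGraph.fromEdgeSet (F : Set (Sym2 V))).Reachable v w)
    (hab : (SimpleGraph.fromEdgeSet (F : Set (Sym2 V))).Reachable a b)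
    (hK : a = b ∨ s(a, b) ∈ K)
    (hsame : ∀ e ∈ D, (v ∈ U e ↔ w ∈ U e) ↔ (a ∈ U e ↔ b ∈ U e)) :
    (SimpleGraph.fromEdgeSet (((F \ D : Finset (Sym2 V)) : Set (Sym2 V)) ∪ K)).Reachable v w := by
  set H := SimpleGraph.fromEdgeSet (((F \ D : Finset (Sym2 V)) : Set (Sym2 V)) ∪ K) with hH
  set C : Finset V := univ.filter fun x => H.Reachable v x with hCdef
  have hCedge : ∀ x z, s(x, z) ∈ ((F \ D : Finset (Sym2 V)) : Set (Sym2 V)) ∪ K →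
      (x ∈ C ↔ z ∈ C) := by
    intro x z hxz
    by_cases hne : x = z
    · rw [hne]
    have hadj : H.Adj x z := (SimpleGraph.fromEdgeSet_adj _).2 ⟨hxz, hne⟩
    simp only [hCdef, mem_filter, mem_univ, true_and]
    exact ⟨fun h => h.trans hadj.reachable, fun h => h.trans hadj.symm.reachable⟩
  have hC : ∀ e ∈ F, inCut C e → e ∈ D := by
    intro e he hc
    by_contra hD
    induction e using Sym2.ind with
    | _ x z =>
      exact (inCut_mk _ _ _).1 hc (hCedge x z (Or.inl (by simp [he, hD])))
  have hpar := parity_const U hU C hC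
  have h1 := const_of_reachable _ hpar hvw
  have h2 := const_of_reachable _ hpar hab
  have habC : a ∈ C ↔ b ∈ C := by
    rcases hK with rfl | h
    · rfl
    · exact hCedge a b (Or.inr h)
  have hsum : (∑ e ∈ D.filter (inCut C), if v ∈ U e then 1 else 0 : ZMod 2) -
        (∑ e ∈ D.filter (inCut C), if w ∈ U e then 1 else 0) =
      (∑ e ∈ D.filter (inCut C), if a ∈ U e then 1 else 0) -
        ∑ e ∈ D.filter (inCut C), if b ∈ U e then 1 else 0 := by
    rw [← sum_sub_distrib, ← sum_sub_distrib]
    refine sum_congr rfl fun e he => ?_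
    have h := hsame e (mem_filter.1 he).1
    rw [ite_sub_ite_zmod_two, ite_sub_ite_zmod_two]
    exact if_congr (hsame e (mem_filter.1 he).1) rfl rfl
  have hv : v ∈ C := by simp [hCdef]
  by_contra hw
  have hw' : w ∉ C := by simpa [hCdef] using hw
  have hab' : (if a ∈ C then 1 else 0 : ZMod 2) = if b ∈ C then 1 else 0 := by simp [habC]
  rw [hab'] at h2
  have h2' := add_left_cancel h2
  rw [h2', sub_self, sub_eq_zero] at hsum
  rw [hsum] at h1
  have h3 := add_right_cancel h1
  simp [hv, hw'] at h3

/-! ### Representatives in autarkic tuples -/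

/-- In an autarkic tuple, a demand pair separated by one set `A` is separated by a second set
`A'`, and every demand pair separated by both `A` and `A'` is separated by the same sets of the
tuple. -/
lemma tuple_partner [DecidableEq V] {𝒟 : Finset (Finset V)} (hD : ∀ d ∈ 𝒟, d.card = 2)
    {P : Finset (Finset V)} (hP : IsAutarkicTuple 𝒟 P) {d : Finset V}
    (hd : d ∈ sepT 𝒟 P) :
    ∃ A ∈ P, ∃ A' ∈ P, A ≠ A' ∧ d ∈ sep 𝒟 A ∩ sep 𝒟 A' ∧
      ∀ r ∈ sep 𝒟 A ∩ sep 𝒟 A', ∀ B ∈ P, d ∈ sep 𝒟 B ↔ r ∈ sep 𝒟 B := by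
  rcases hP with ⟨A₁, A₂, rfl, hne, -, heq, -⟩ | ⟨A₁, A₂, A₃, rfl, h12, h13, h23, hd12, hd13,
    hd23, -, -, -, hU⟩
  · have hd1 : d ∈ sep 𝒟 A₁ := by simpa [sepT, heq] using hd
    refine ⟨A₁, by simp, A₂, by simp, hne, by simp [← heq, hd1], fun r hr B hB => ?_⟩
    have hr1 : r ∈ sep 𝒟 A₁ := (mem_inter.1 hr).1
    rcases (by simpa using hB : B = A₁ ∨ B = A₂) with rfl | rfl
    · simp [hd1, hr1]
    · simp [← heq, hd1, hr1]
  -- Each demand pair is separated by none or by exactly two of the three disjoint sets.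
  have key : ∀ r ∈ 𝒟, (r ∈ sep 𝒟 A₁ ∧ r ∈ sep 𝒟 A₂ ∧ r ∉ sep 𝒟 A₃) ∨
      (r ∈ sep 𝒟 A₁ ∧ r ∉ sep 𝒟 A₂ ∧ r ∈ sep 𝒟 A₃) ∨
      (r ∉ sep 𝒟 A₁ ∧ r ∈ sep 𝒟 A₂ ∧ r ∈ sep 𝒟 A₃) ∨
      (r ∉ sep 𝒟 A₁ ∧ r ∉ sep 𝒟 A₂ ∧ r ∉ sep 𝒟 A₃) := by
    intro r hr
    obtain ⟨x, z, hxz, rfl⟩ := card_eq_two.1 (hD r hr)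
    have hu : ¬ ({x, z} : Finset V) ∈ sep 𝒟 (A₁ ∪ A₂ ∪ A₃) := by
      rw [hU]
      exact notMem_empty _
    rw [mem_sep_pair hxz hr] at hu
    simp only [mem_sep_pair hxz hr]
    rw [Finset.disjoint_left] at hd12 hd13 hd23
    have := @hd12 x
    have := @hd12 z
    have := @hd13 x
    have := @hd13 z
    have := @hd23 x
    have := @hd23 z
    simp only [mem_union] at hu
    clear hd hD hU hr hd12 hd13 hd23
    grind
  have h𝒟 : ∀ {r A}, r ∈ sep 𝒟 A → r ∈ 𝒟 := fun h => (mem_filter.1 h).1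
  have hd' : d ∈ sep 𝒟 A₁ ∨ d ∈ sep 𝒟 A₂ ∨ d ∈ sep 𝒟 A₃ := by simpa [sepT] using hd
  have hdD : d ∈ 𝒟 := by rcases hd' with h | h | h <;> exact h𝒟 h
  rcases key d hdD with h | h | h | h
  · refine ⟨A₁, by simp, A₂, by simp, h12, by simp [h], fun r hr B hB => ?_⟩
    obtain ⟨hr1, hr2⟩ := mem_inter.1 hr
    have := key r (h𝒟 hr1)
    rcases (by simpa using hB : B = A₁ ∨ B = A₂ ∨ B = A₃) with rfl | rfl | rfl <;> grind
  · refine ⟨A₁, by simp, A₃, by simp, h13, by simp [h], fun r hr B hB => ?_⟩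
    obtain ⟨hr1, hr2⟩ := mem_inter.1 hr
    have := key r (h𝒟 hr1)
    rcases (by simpa using hB : B = A₁ ∨ B = A₂ ∨ B = A₃) with rfl | rfl | rfl <;> grind
  · refine ⟨A₂, by simp, A₃, by simp, h23, by simp [h], fun r hr B hB => ?_⟩
    obtain ⟨hr1, hr2⟩ := mem_inter.1 hr
    have := key r (h𝒟 hr1)
    rcases (by simpa using hB : B = A₁ ∨ B = A₂ ∨ B = A₃) with rfl | rfl | rfl <;> grind
  · exact absurd hd' (by simp [h])

/-- A demand pair separated by a tuple of `𝒞` has a designated representative separated by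
exactly the same covered sets. -/
lemma exists_rep [DecidableEq V] {𝒟 : Finset (Finset V)} (hD : ∀ d ∈ 𝒟, d.card = 2)
    {𝒞 : Finset (Finset (Finset V))} (haut : ∀ P ∈ 𝒞, IsAutarkicTuple 𝒟 P)
    (hcf : ∀ P ∈ 𝒞, ∀ Q ∈ 𝒞, P ≠ Q → sepT 𝒟 P ∩ sepT 𝒟 Q = ∅)
    (rep : Finset (Finset V) → Finset V → Finset V → Finset V)
    (hrep : ∀ P ∈ 𝒞, ∀ A ∈ P, ∀ A' ∈ P, A ≠ A' → (sep 𝒟 A ∩ sep 𝒟 A').Nonempty →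
      rep P A A' ∈ sep 𝒟 A ∩ sep 𝒟 A')
    {P : Finset (Finset V)} (hP : P ∈ 𝒞) {d : Finset V} (hd : d ∈ sepT 𝒟 P) :
    ∃ A ∈ P, ∃ A' ∈ P, A ≠ A' ∧ (sep 𝒟 A ∩ sep 𝒟 A').Nonempty ∧ rep P A A' ∈ 𝒟 ∧
      ∀ Q ∈ 𝒞, ∀ U, Covers 𝒟 Q U → (d ∈ sep 𝒟 U ↔ rep P A A' ∈ sep 𝒟 U) := by
  obtain ⟨A, hA, A', hA', hne, hdA, h⟩ := tuple_partner hD (haut P hP) hd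
  have hr := hrep P hP A hA A' hA' hne ⟨d, hdA⟩
  refine ⟨A, hA, A', hA', hne, ⟨d, hdA⟩, (mem_filter.1 (mem_inter.1 hr).1).1, ?_⟩
  rintro Q hQ U ⟨B, hB, hBU⟩
  rw [← hBU]
  by_cases hPQ : P = Q
  · subst hPQ
    exact h _ hr B hB
  have hnot : ∀ r ∈ sepT 𝒟 P, r ∉ sep 𝒟 B := fun r hr hrB => by
    have hmem : r ∈ sepT 𝒟 P ∩ sepT 𝒟 Q := mem_inter.2 ⟨hr, mem_biUnion.2 ⟨B, hB, hrB⟩⟩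
    simp [hcf P hP Q hQ hPQ] at hmem
  exact iff_of_false (hnot _ hd) (hnot _ (mem_biUnion.2 ⟨A, hA, (mem_inter.1 hr).1⟩))

lemma sep_nonempty_of_covers [DecidableEq V] {𝒟 : Finset (Finset V)} {P : Finset (Finset V)}
    (hP : IsAutarkicTuple 𝒟 P) {U : Finset V} (hU : Covers 𝒟 P U) : (sep 𝒟 U).Nonempty := by
  obtain ⟨A, hA, hAU⟩ := hU
  rw [← hAU, nonempty_iff_ne_empty]
  rcases hP with ⟨A₁, A₂, rfl, -, -, heq, hne⟩ | ⟨A₁, A₂, A₃, rfl, -, -, -, -, -, -, h1, h2, h3, -⟩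
  · rcases (by simpa using hA : A = A₁ ∨ A = A₂) with rfl | rfl
    · exact hne
    · exact heq ▸ hne
  · rcases (by simpa using hA : A = A₁ ∨ A = A₂ ∨ A = A₃) with rfl | rfl | rfl <;> assumption

/-! ### The cost bound -/

/-- A feasible `F` crosses every set separating some demand pair. -/
lemma exists_cut_edge [DecidableEq V] {𝒟 : Finset (Finset V)} (hD : ∀ d ∈ 𝒟, d.card = 2)
    {F : Finset (Sym2 V)}
    (hF : ∀ d ∈ 𝒟, ∀ v ∈ d, ∀ w ∈ d,
      (SimpleGraph.fromEdgeSet (F : Set (Sym2 V))).Reachable v w)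
    {U : Finset V} (hU : (sep 𝒟 U).Nonempty) : ∃ e ∈ F, inCut U e := by
  obtain ⟨d, hd⟩ := hU
  have hd𝒟 := (mem_filter.1 hd).1
  obtain ⟨x, z, hxz, rfl⟩ := card_eq_two.1 (hD d hd𝒟)
  rw [mem_sep_pair hxz hd𝒟] at hd
  by_contra! hno
  refine hd (iff_of_eq (const_of_reachable (fun u => u ∈ U) (fun p q hpq => ?_)
    (hF _ hd𝒟 x (by simp) z (by simp))))
  have h := hno _ hpq
  rw [inCut_mk, not_not] at h
  exact propext h

open Classical in
/-- If every set of `𝒰` is crossed by some edge of `D`, dual feasibility bounds the `y`-value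
of `𝒰` by `c(D)`. -/
lemma sum_le_of_cut [Fintype V] {c : Sym2 V → ℝ} {y : Finset V → ℝ} (hy : ∀ U, 0 ≤ y U)
    {D : Finset (Sym2 V)}
    (hdual : ∀ e ∈ D, ∑ U ∈ univ.filter (fun U : Finset V => inCut U e), y U ≤ c e)
    {𝒰 : Finset (Finset V)} (h : ∀ U ∈ 𝒰, ∃ e ∈ D, inCut U e) :
    ∑ U ∈ 𝒰, y U ≤ ∑ e ∈ D, c e := by
  calc ∑ U ∈ 𝒰, y U
      ≤ ∑ U ∈ 𝒰, ∑ e ∈ D, if inCut U e then y U else 0 := by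
        refine sum_le_sum fun U hU => ?_
        obtain ⟨e, he, hc⟩ := h U hU
        refine le_trans (by simp [hc]) (single_le_sum (fun e _ => ?_) he)
        split_ifs
        exacts [hy U, le_rfl]
    _ = ∑ e ∈ D, ∑ U ∈ 𝒰, if inCut U e then y U else 0 := sum_comm
    _ ≤ ∑ e ∈ D, ∑ U ∈ univ.filter (fun U : Finset V => inCut U e), y U := by
        refine sum_le_sum fun e _ => ?_
        rw [← sum_filter]
        exact sum_le_sum_of_subset_of_nonneg (filter_subset_filter _ (subset_univ _))
          fun U _ _ => hy U
    _ ≤ ∑ e ∈ D, c e := sum_le_sum hdual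

/-! ### Choice of the removed edges -/


open Classical in
/-- removing a suitable edge set `D` from a feasible Steiner forest `F`
leaves, together with the auxiliary edges `K` joining designated representative demand
pairs of the crossing-free autarkic collection `𝒞`, a graph connecting every demand
pair, where `c(D) ≥ coverage(𝒞) − ∑_{U : |F ∩ δ(U)| ≥ 2} y_U`; consequently
`c(F \ D) ≤ c(F) − coverage(𝒞) + ∑_{U : |F ∩ δ(U)| ≥ 2} y_U`. -/
theorem autarkic_contraction [Fintype V] [DecidableEq V]
    (G : SimpleGraph V) [DecidableRel G.Adj]
    (c : Sym2 V → ℝ) (hc : ∀ e, 0 ≤ c e)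
    (𝒟 : Finset (Finset V)) (hD : ∀ d ∈ 𝒟, d.card = 2)
    (y : Finset V → ℝ) (hy : ∀ U, 0 ≤ y U)
    (hdual : ∀ e ∈ G.edgeFinset,
      ∑ U ∈ univ.filter (fun U : Finset V => inCut U e), y U ≤ c e)
    (hlam : ∀ U U' : Finset V, 0 < y U → 0 < y U' → U ⊆ U' ∨ U' ⊆ U ∨ Disjoint U U')
    (𝒞 : Finset (Finset (Finset V)))
    (haut : ∀ P ∈ 𝒞, IsAutarkicTuple 𝒟 P)
    (hcf : ∀ P ∈ 𝒞, ∀ Q ∈ 𝒞, P ≠ Q → sepT 𝒟 P ∩ sepT 𝒟 Q = ∅)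
    (hpos : ∀ P ∈ 𝒞, ∀ A ∈ P, 0 < y A)
    (rep : Finset (Finset V) → Finset V → Finset V → Finset V)
    (hrep : ∀ P ∈ 𝒞, ∀ A ∈ P, ∀ A' ∈ P, A ≠ A' → (sep 𝒟 A ∩ sep 𝒟 A').Nonempty →
      rep P A A' ∈ sep 𝒟 A ∩ sep 𝒟 A')
    (K : Set (Sym2 V))
    (hK : K = {e : Sym2 V | ∃ P ∈ 𝒞, ∃ A ∈ P, ∃ A' ∈ P, A ≠ A' ∧
      (sep 𝒟 A ∩ sep 𝒟 A').Nonempty ∧ ∃ a b : V, rep P A A' = {a, b} ∧ e = s(a, b)})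
    (F : Finset (Sym2 V)) (hFE : F ⊆ G.edgeFinset)
    (hF : ∀ d ∈ 𝒟, ∀ v ∈ d, ∀ w ∈ d,
      (SimpleGraph.fromEdgeSet (F : Set (Sym2 V))).Reachable v w) :
    ∃ D ⊆ F,
      ((∑ U ∈ univ.filter (fun U : Finset V => ∃ P ∈ 𝒞, Covers 𝒟 P U), y U) -
          (∑ U ∈ univ.filter
            (fun U : Finset V => 2 ≤ (F.filter fun e => inCut U e).card), y U)
        ≤ ∑ e ∈ D, c e) ∧
      (∀ d ∈ 𝒟, ∀ v ∈ d, ∀ w ∈ d,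
        (SimpleGraph.fromEdgeSet (((F \ D : Finset (Sym2 V)) : Set (Sym2 V)) ∪ K)).Reachable v w) ∧
      (∑ e ∈ F \ D, c e ≤ (∑ e ∈ F, c e) -
          (∑ U ∈ univ.filter (fun U : Finset V => ∃ P ∈ 𝒞, Covers 𝒟 P U), y U) +
          ∑ U ∈ univ.filter
            (fun U : Finset V => 2 ≤ (F.filter fun e => inCut U e).card), y U) := by
  have h_edge : ∀ U : Finset V, (∃ P ∈ 𝒞, Covers 𝒟 P U) → ∃ e ∈ F, inCut U e := by
    rintro U ⟨P, hP, hc⟩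
    exact exists_cut_edge hD hF (sep_nonempty_of_covers (haut P hP) hc)
  set D : Finset (Sym2 V) := F.filter fun e =>
    ∃ U : Finset V, (∃ P ∈ 𝒞, Covers 𝒟 P U) ∧ ∀ e' ∈ F, inCut U e' ↔ e' = e with hDdef
  have hDF : D ⊆ F := filter_subset _ _
  have h1 : (∑ U ∈ univ.filter (fun U : Finset V => ∃ P ∈ 𝒞, Covers 𝒟 P U), y U) -
      (∑ U ∈ univ.filter
        (fun U : Finset V => 2 ≤ (F.filter fun e => inCut U e).card), y U) ≤ ∑ e ∈ D, c e := by
    have hle : ∑ U ∈ univ.filter (fun U : Finset V => ∃ P ∈ 𝒞, Covers 𝒟 P U) \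
        univ.filter (fun U : Finset V => 2 ≤ (F.filter fun e => inCut U e).card), y U ≤
        ∑ e ∈ D, c e := by
      refine sum_le_of_cut hy (fun e he => ?_) fun U hU => ?_
      · convert hdual e (hFE (hDF he))
      simp only [mem_sdiff, mem_filter, mem_univ, true_and, not_le] at hU
      obtain ⟨hcov, hlt⟩ := hU
      obtain ⟨e, he, hc⟩ := h_edge U hcov
      refine ⟨e, mem_filter.2 ⟨he, U, hcov, fun e' he' => ⟨fun hc' => ?_, ?_⟩⟩, hc⟩
      · exact card_le_one.1 (Nat.le_of_lt_succ hlt) _ (mem_filter.2 ⟨he', hc'⟩) _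
          (mem_filter.2 ⟨he, hc⟩)
      · rintro rfl
        exact hc
    rw [sub_le_iff_le_add]
    refine le_trans ?_ (add_le_add_left hle _)
    rw [← sum_union sdiff_disjoint]
    exact sum_le_sum_of_subset_of_nonneg (by simp) fun U _ _ => hy U
  refine ⟨D, hDF, h1, ?_, ?_⟩
  · have hch : ∀ e : Sym2 V, ∃ U : Finset V, e ∈ D →
        (∃ P ∈ 𝒞, Covers 𝒟 P U) ∧ ∀ e' ∈ F, inCut U e' ↔ e' = e := by
      intro e
      by_cases he : e ∈ D
      · obtain ⟨U, hU⟩ := (mem_filter.1 he).2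
        exact ⟨U, fun _ => hU⟩
      · exact ⟨∅, fun h => absurd h he⟩
    choose U hU using hch
    intro d hd v hv w hw
    by_cases hvw : v = w
    · rw [hvw]
    have hdvw : d = {v, w} := by
      refine (eq_of_subset_of_card_le ?_ ?_).symm
      · simp [insert_subset_iff, hv, hw]
      · rw [hD d hd, card_pair hvw]
    subst hdvw
    have hreach := hF _ hd v hv w hw
    by_cases hsep : ∃ P ∈ 𝒞, ({v, w} : Finset V) ∈ sepT 𝒟 P
    · obtain ⟨P, hP, hdP⟩ := hsep
      obtain ⟨A, hA, A', hA', hne, hnonempty, hr𝒟, hiff⟩ :=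
        exists_rep hD haut hcf rep hrep hP hdP
      obtain ⟨a, b, hab, hrab⟩ := card_eq_two.1 (hD _ hr𝒟)
      have hKab : s(a, b) ∈ K := by
        rw [hK]
        exact ⟨P, hP, A, hA, A', hA', hne, hnonempty, a, b, hrab, rfl⟩
      rw [hrab] at hr𝒟 hiff
      have := reachable_of_same K U (fun e he => (hU e he).2) hreach
        (hF _ hr𝒟 a (by simp) b (by simp)) (Or.inr hKab) fun e he => by
          obtain ⟨Q, hQ, hc⟩ := (hU e he).1
          have h := hiff Q hQ _ hc
          rw [mem_sep_pair hvw hd, mem_sep_pair hab hr𝒟] at h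
          exact not_iff_not.1 h
      convert this
    -- No covered set separates the pair, so the degenerate pair `(v, v)` serves as `r`.
    · have := reachable_of_same K U (fun e he => (hU e he).2) hreach
        (SimpleGraph.Reachable.refl v) (Or.inl rfl) fun e he => by
          obtain ⟨Q, hQ, B, hB, hBU⟩ := (hU e he).1
          have h : ({v, w} : Finset V) ∉ sep 𝒟 (U e) := fun h =>
            hsep ⟨Q, hQ, mem_biUnion.2 ⟨B, hB, hBU ▸ h⟩⟩
          rw [mem_sep_pair hvw hd, not_not] at h
          simp [h]
      convert this
  · have h2 := sum_sdiff hDF (f := c)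
    linarith
end

section
/- Let y be dual feasible and let F be a feasible Steiner forest. Then c(F) ≥ Σ_{U ⊆ V : sep(U) ≠ ∅} y_U + Σ_{U ⊆ V : |F ∩ δ(U)| ≥ 2} y_U. In particular, c(F) ≥ Σ_{U ⊆ V} y_U · |F ∩ δ(U)|. -/
/-!
Charge each `y U` to the edges of `F` crossing `U`. Summing the dual constraints over `e ∈ F` and
exchanging the order of summation gives `∑ U, y U * |F ∩ δ(U)| ≤ c(F)`. A set `U` separating a
demand pair is crossed by at least one edge of `F`, since a path of `F` joining the pair leaves `U`
somewhere (`exists_inCut_of_sep`). Hence `|F ∩ δ(U)|` is at least the number of the two conditions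
`sep U ≠ ∅` and `|F ∩ δ(U)| ≥ 2` that hold for `U`, which yields the two-sum bound
termwise.
-/

open Finset

variable {V : Type*}

/-- `F` is a feasible Steiner forest: both vertices of each demand pair lie in the same
connected component of the subgraph `(V, F)`. -/
def Feasible (𝒟 : Finset (Finset V)) (F : Finset (Sym2 V)) : Prop :=
  ∀ d ∈ 𝒟, ∀ v ∈ d, ∀ w ∈ d,
    (SimpleGraph.fromEdgeSet (F : Set (Sym2 V))).Reachable v w

/-- A feasible Steiner forest contains an edge of every cut that separates a demand pair. -/
lemma exists_inCut_of_sep [DecidableEq V] {𝒟 : Finset (Finset V)} {F : Finset (Sym2 V)}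
    (hD : ∀ d ∈ 𝒟, d.card = 2) (hF : Feasible 𝒟 F) {U : Finset V} (hU : sep 𝒟 U ≠ ∅) :
    ∃ e ∈ F, inCut U e := by
  obtain ⟨d, hd⟩ := nonempty_iff_ne_empty.mpr hU
  obtain ⟨hd, hcard⟩ := mem_filter.mp hd
  obtain ⟨v, hv⟩ := card_pos.mp (by omega : 0 < (d ∩ U).card)
  rw [mem_inter] at hv
  -- The pair has two vertices and only one of them lies in `U`.
  obtain ⟨w, hw⟩ : (d \ U).Nonempty := by
    have := hD d hd
    have := card_sdiff_add_card_inter d U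
    exact card_pos.mp (by omega)
  rw [mem_sdiff] at hw
  obtain ⟨p⟩ := hF d hd v hv.1 w hw.1
  obtain ⟨a, -, haU, hbU⟩ := p.exists_boundary_dart (U : Set V) hv.2 hw.2
  exact ⟨s(a.fst, a.snd), ((SimpleGraph.fromEdgeSet_adj _).mp a.adj).1, a.fst, a.snd, rfl, haU, hbU⟩

open Classical in
/-- for a dual feasible `y` and a feasible Steiner forest `F`,
`c(F) ≥ ∑_{U : sep U ≠ ∅} y_U + ∑_{U : |F ∩ δ(U)| ≥ 2} y_U`, and
`c(F) ≥ ∑_U y_U · |F ∩ δ(U)|`. -/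
theorem dual_lower_bound [Fintype V] [DecidableEq V]
    (G : SimpleGraph V) [DecidableRel G.Adj]
    (c : Sym2 V → ℝ) (hc : ∀ e, 0 ≤ c e)
    (𝒟 : Finset (Finset V)) (hD : ∀ d ∈ 𝒟, d.card = 2)
    (y : Finset V → ℝ) (hy : ∀ U, 0 ≤ y U)
    (hdual : ∀ e ∈ G.edgeFinset,
      ∑ U ∈ univ.filter (fun U : Finset V => inCut U e), y U ≤ c e)
    (F : Finset (Sym2 V)) (hFE : F ⊆ G.edgeFinset) (hF : Feasible 𝒟 F) :
    ((∑ U ∈ univ.filter (fun U : Finset V => sep 𝒟 U ≠ ∅), y U) +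
        ∑ U ∈ univ.filter (fun U : Finset V => 2 ≤ (F.filter (fun e => inCut U e)).card), y U
      ≤ ∑ e ∈ F, c e) ∧
    ∑ U : Finset V, y U * ((F.filter (fun e => inCut U e)).card : ℝ) ≤ ∑ e ∈ F, c e := by
  have hmul : ∑ U : Finset V, y U * ((F.filter (fun e => inCut U e)).card : ℝ)
      ≤ ∑ e ∈ F, c e := by
    calc ∑ U : Finset V, y U * ((F.filter (fun e => inCut U e)).card : ℝ)
        = ∑ U : Finset V, ∑ e ∈ F, if inCut U e then y U else 0 := by
          refine sum_congr rfl fun U _ => ?_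
          rw [← sum_filter, sum_const, nsmul_eq_mul, mul_comm]
      _ = ∑ e ∈ F, ∑ U ∈ univ.filter (fun U : Finset V => inCut U e), y U := by
          rw [sum_comm]
          exact sum_congr rfl fun e _ => (sum_filter _ _).symm
      _ ≤ ∑ e ∈ F, c e := sum_le_sum fun e he => hdual e (hFE he)
  refine ⟨le_trans ?_ hmul, hmul⟩
  rw [sum_filter, sum_filter, ← sum_add_distrib]
  refine sum_le_sum fun U _ => ?_
  have hyU := hy U
  have hone : sep 𝒟 U ≠ ∅ → 1 ≤ (F.filter (fun e => inCut U e)).card := fun h => by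
    obtain ⟨e, he, hcut⟩ := exists_inCut_of_sep hD hF h
    exact card_pos.mpr ⟨e, mem_filter.mpr ⟨he, hcut⟩⟩
  generalize (F.filter (fun e => inCut U e)).card = k at hone ⊢
  by_cases h2 : 2 ≤ k
  · have hk : (2 : ℝ) ≤ k := by exact_mod_cast h2
    rw [if_pos h2]
    split_ifs <;> nlinarith
  · rw [if_neg h2, add_zero]
    split_ifs with h1
    · have hk : (1 : ℝ) ≤ k := by exact_mod_cast hone h1
      nlinarith
    · positivity
end

section
/- Let F be a feasible Steiner forest and let U ⊆ V satisfy sep(U) = ∅, i.e., U separates no demand pair. If F ∩ δ(U) consists of a single edge e, then F \ {e} is also a feasible Steiner forest. Consequently, an inclusionwise minimal feasible Steiner forest F satisfies |F ∩ δ(U)| = 0 or |F ∩ δ(U)| ≥ 2 for every U ⊆ V with sep(U) = ∅. -/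
open Finset

variable {V : Type*}

/-! A walk between two vertices on the same side of a cut crosses the cut an even number of
times. If the only available cut edge is `s(a, b)`, every excursion to the other side leaves
through this edge and comes back through it to the same endpoint, so all excursions can be cut
out of the walk (`reachable_same_side`). Since `U` separates no demand pair, both ends of each
pair lie on the same side of `U` (`mem_iff_of_sep_eq_empty`), so deleting the single cut edge
keeps the forest feasible. For a minimal forest this rules out a cut of cardinality one. -/

/-- If `s(a, b)` is the only edge of `H` crossing the cut `p`, and `H'` contains all the
non-crossing edges of `H`, then two vertices on the side of `a` that are connected in `H` are
connected in `H'`. -/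
lemma reachable_same_side {H H' : SimpleGraph V} {p : V → Prop} {a b : V}
    (hcross : ∀ x y, H.Adj x y → p x → ¬ p y → x = a ∧ y = b)
    (hsame : ∀ x y, H.Adj x y → (p x ↔ p y) → H'.Adj x y)
    {v w : V} (hvw : H.Reachable v w) (hv : p v) (hw : p w) : H'.Reachable v w := by
  -- Once the walk has crossed, remember that `a` was already reached in `H'`:
  -- this is where the walk re-enters.
  suffices key : (p w → H'.Reachable v w) ∧ (¬ p w → H'.Reachable v a) from key.1 hw
  clear hw
  rw [SimpleGraph.reachable_iff_reflTransGen] at hvw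
  induction hvw with
  | refl => exact ⟨fun _ => .refl _, fun h => absurd hv h⟩
  | @tail x y _ hxy ih =>
    by_cases hx : p x <;> by_cases hy : p y
    · exact ⟨fun _ => (ih.1 hx).trans (hsame x y hxy (by tauto)).reachable, fun h => absurd hy h⟩
    · obtain ⟨rfl, rfl⟩ := hcross x y hxy hx hy
      exact ⟨fun h => absurd h hy, fun _ => ih.1 hx⟩
    · obtain ⟨rfl, rfl⟩ := hcross y x hxy.symm hy hx
      exact ⟨fun _ => ih.2 hx, fun h => absurd hy h⟩
    · exact ⟨fun h => absurd h hy, fun _ => ih.2 hx⟩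

lemma mem_iff_of_sep_eq_empty [DecidableEq V] {𝒟 : Finset (Finset V)} {U : Finset V}
    (hU : sep 𝒟 U = ∅) {d : Finset V} (hd : d ∈ 𝒟) (hcard : d.card = 2) {v w : V}
    (hv : v ∈ d) (hw : w ∈ d) (hvU : v ∈ U) : w ∈ U := by
  by_contra hwU
  have hne : (d ∩ U).card ≠ 1 := fun h => by
    have hmem : d ∈ sep 𝒟 U := Finset.mem_filter.2 ⟨hd, h⟩
    simp [hU] at hmem
  have hpos : 0 < (d ∩ U).card := Finset.card_pos.2 ⟨v, Finset.mem_inter.2 ⟨hv, hvU⟩⟩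
  have hsub : d ∩ U ⊆ d.erase w := fun x hx => by
    rw [Finset.mem_inter] at hx
    exact Finset.mem_erase.2 ⟨fun h => hwU (h ▸ hx.2), hx.1⟩
  have hle := Finset.card_le_card hsub
  rw [Finset.card_erase_of_mem hw, hcard] at hle
  omega

open Classical in
/-- if `U` separates no demand pair and `F ∩ δ(U)` is a single edge `e`,
then `F \ {e}` is still feasible; consequently an inclusionwise minimal feasible Steiner
forest has `|F ∩ δ(U)| = 0` or `|F ∩ δ(U)| ≥ 2` for every such `U`. -/
theorem remove_single_cut_edge [Fintype V] [DecidableEq V]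
    (G : SimpleGraph V) [DecidableRel G.Adj]
    (𝒟 : Finset (Finset V)) (hD : ∀ d ∈ 𝒟, d.card = 2) :
    (∀ F : Finset (Sym2 V), F ⊆ G.edgeFinset → Feasible 𝒟 F →
      ∀ U : Finset V, sep 𝒟 U = ∅ → ∀ e : Sym2 V,
        F.filter (fun e' => inCut U e') = {e} → Feasible 𝒟 (F.erase e)) ∧
    (∀ F : Finset (Sym2 V), F ⊆ G.edgeFinset → Feasible 𝒟 F →
      (∀ F' ⊂ F, ¬ Feasible 𝒟 F') →
      ∀ U : Finset V, sep 𝒟 U = ∅ →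
        (F.filter (fun e => inCut U e)).card = 0 ∨
          2 ≤ (F.filter (fun e => inCut U e)).card) := by
  have main : ∀ F : Finset (Sym2 V), F ⊆ G.edgeFinset → Feasible 𝒟 F →
      ∀ U : Finset V, sep 𝒟 U = ∅ → ∀ e : Sym2 V,
        F.filter (fun e' => inCut U e') = {e} → Feasible 𝒟 (F.erase e) := by
    intro F _ hF U hU e he d hd v hv w hw
    have hcut : ∀ f, f ∈ F ∧ inCut U f ↔ f = e := fun f => by
      rw [← Finset.mem_filter, he, Finset.mem_singleton]
    obtain ⟨a, b, rfl, ha, hb⟩ := ((hcut e).2 rfl).2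
    have hcross : ∀ x y, (SimpleGraph.fromEdgeSet (F : Set (Sym2 V))).Adj x y →
        x ∈ U → y ∉ U → x = a ∧ y = b := by
      intro x y hxy hx hy
      have hxF : s(x, y) ∈ F := (SimpleGraph.fromEdgeSet_adj _).1 hxy |>.1
      rcases Sym2.eq_iff.1 ((hcut s(x, y)).1 ⟨hxF, x, y, rfl, hx, hy⟩) with h | ⟨rfl, rfl⟩
      · exact h
      · exact absurd hx hb
    have hsame : ∀ x y, (SimpleGraph.fromEdgeSet (F : Set (Sym2 V))).Adj x y →
        (x ∈ U ↔ y ∈ U) →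
        (SimpleGraph.fromEdgeSet ((F.erase s(a, b) : Finset (Sym2 V)) : Set (Sym2 V))).Adj x y := by
      intro x y hxy hiff
      rw [SimpleGraph.fromEdgeSet_adj, Finset.mem_coe] at hxy ⊢
      refine ⟨Finset.mem_erase.2 ⟨fun h => ?_, hxy.1⟩, hxy.2⟩
      rcases Sym2.eq_iff.1 h with ⟨rfl, rfl⟩ | ⟨rfl, rfl⟩ <;> tauto
    have hvw := hF d hd v hv w hw
    by_cases hvU : v ∈ U
    · exact reachable_same_side (p := (· ∈ U)) hcross hsame hvw hvU
        (mem_iff_of_sep_eq_empty hU hd (hD d hd) hv hw hvU)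
    · have hwU : w ∉ U := fun h => hvU (mem_iff_of_sep_eq_empty hU hd (hD d hd) hw hv h)
      -- The same cut seen from the other side, with the roles of `a` and `b` exchanged.
      exact reachable_same_side (p := (· ∉ U)) (a := b) (b := a)
        (fun x y hxy hx hy => (hcross y x hxy.symm (not_not.1 hy) hx).symm)
        (fun x y hxy h => hsame x y hxy (not_iff_not.1 h)) hvw hvU hwU
  refine ⟨main, fun F hFG hF hmin U hU => ?_⟩
  by_contra! hcon
  obtain ⟨e, he⟩ := Finset.card_eq_one.1
    (show (F.filter (fun e => inCut U e)).card = 1 by omega)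
  have heF : e ∈ F := (Finset.mem_filter.1 (he ▸ Finset.mem_singleton_self e)).1
  exact hmin _ (Finset.erase_ssubset heF) (main F hFG hF U hU e he)
end

section
/- Let F ⊆ E, and let 𝒮 be a finite collection of nonempty subsets of V such that each S ∈ 𝒮 is contained in the vertex set of a single connected component of the subgraph (V, F), and no two distinct members of 𝒮 are contained in the same connected component of (V, F). Let 𝒜 be a finite collection of pairwise disjoint subsets of V. Call a member S ∈ 𝒮 bad if some U ∈ 𝒜 separates S and also separates some S' ∈ 𝒮 with S' ≠ S. Then the number of bad members of 𝒮 is at most 2 · Σ_{U∈𝒜} max(|F ∩ δ(U)| − 1, 0). -/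
/-!
If `U` separates `S`, then, `S` being inside one component of `(V, F)`, some edge of `F ∩ δ(U)`
lies in that component (`exists_cut_edge`). Distinct members of `𝒮` lie in distinct components,
so these edges are distinct, and `U` separates at most `|F ∩ δ(U)|` members of `𝒮`
(`card_separated_le`). If `U` makes any member bad, it separates `k ≥ 2` members, and
`k ≤ 2 (k - 1) ≤ 2 (|F ∩ δ(U)| - 1)`. Summing over `U ∈ 𝒜` gives the bound.
-/

open Finset

variable {V : Type*}

/-- `U` separates `S`: both `S ∩ U` and `S \ U` are nonempty. -/
def Separates [DecidableEq V] (U S : Finset V) : Prop :=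
  (S ∩ U).Nonempty ∧ (S \ U).Nonempty

/-- A path of `(V, F)` that leaves `U` uses an edge of `F ∩ δ(U)`, whose endpoint in `U` lies in
the component of the path. -/
lemma exists_cut_edge_s11 {F : Finset (Sym2 V)} {U : Finset V} {u v : V}
    (h : (SimpleGraph.fromEdgeSet (F : Set (Sym2 V))).Reachable u v) (hu : u ∈ U) (hv : v ∉ U) :
    ∃ a b, s(a, b) ∈ F ∧ a ∈ U ∧ b ∉ U ∧
      (SimpleGraph.fromEdgeSet (F : Set (Sym2 V))).Reachable u a := by
  obtain ⟨p⟩ := h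
  induction p with
  | nil => exact absurd hu hv
  | @cons x y z hxy q ih =>
    by_cases hy : y ∈ U
    · obtain ⟨a, b, hab, ha, hb, hr⟩ := ih hy hv
      exact ⟨a, b, hab, ha, hb, hxy.reachable.trans hr⟩
    · have hF := (SimpleGraph.fromEdgeSet_adj _).1 hxy
      exact ⟨x, y, by simpa using hF.1, hu, hy, SimpleGraph.Reachable.refl _⟩

open Classical in
/-- A set `U` separates at most `|F ∩ δ(U)|` members of `𝒮`: each separated member has a cut edge in
its component, and an edge determines its component, hence the member. -/
lemma card_separated_le [DecidableEq V] (F : Finset (Sym2 V)) (𝒮 : Finset (Finset V))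
    (hScomp : ∀ S ∈ 𝒮, ∀ u ∈ S, ∀ v ∈ S,
      (SimpleGraph.fromEdgeSet (F : Set (Sym2 V))).Reachable u v)
    (hSdiff : ∀ S ∈ 𝒮, ∀ S' ∈ 𝒮, S ≠ S' → ∀ u ∈ S, ∀ v ∈ S',
      ¬ (SimpleGraph.fromEdgeSet (F : Set (Sym2 V))).Reachable u v)
    (U : Finset V) :
    (𝒮.filter fun S => Separates U S).card ≤ (F.filter fun e => inCut U e).card := by
  refine Finset.card_le_card_of_forall_subsingleton
    (fun S e => ∃ u a b, e = s(a, b) ∧ u ∈ S ∧ a ∈ U ∧ b ∉ U ∧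
      (SimpleGraph.fromEdgeSet (F : Set (Sym2 V))).Reachable u a) ?_ ?_
  · intro S hS
    obtain ⟨hS, ⟨u, hu⟩, ⟨v, hv⟩⟩ := Finset.mem_filter.1 hS
    rw [Finset.mem_inter] at hu
    rw [Finset.mem_sdiff] at hv
    obtain ⟨a, b, hF, ha, hb, hr⟩ := exists_cut_edge_s11 (hScomp S hS u hu.1 v hv.1) hu.2 hv.2
    exact ⟨s(a, b), Finset.mem_filter.2 ⟨hF, a, b, rfl, ha, hb⟩, u, a, b, rfl, hu.1, ha, hb, hr⟩
  · rintro e - S ⟨hS, u, a, b, rfl, hu, ha, -, hr⟩ S' ⟨hS', u', a', b', heq, hu', -, hb', hr'⟩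
    by_contra hne
    have haa : a = a' := by
      -- the two edges cannot be matched crosswise: exactly one endpoint lies in `U`
      rcases Sym2.eq_iff.1 heq with h | h
      · exact h.1
      · exact absurd (h.1 ▸ ha) hb'
    subst haa
    exact hSdiff S (Finset.mem_filter.1 hS).1 S' (Finset.mem_filter.1 hS').1 hne u hu u' hu'
      (hr.trans hr'.symm)

open Classical in
/-- if each `S ∈ 𝒮` lies in a single connected component of `(V, F)` and
distinct members of `𝒮` lie in distinct components, then the number of members `S ∈ 𝒮`
for which some `U ∈ 𝒜` separates both `S` and another member of `𝒮` is at most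
`2 · ∑_{U ∈ 𝒜} max(|F ∩ δ(U)| − 1, 0)`. -/
theorem bad_members_bound [Fintype V] [DecidableEq V]
    (G : SimpleGraph V) [DecidableRel G.Adj]
    (F : Finset (Sym2 V)) (hFE : F ⊆ G.edgeFinset)
    (𝒮 : Finset (Finset V))
    (hSne : ∀ S ∈ 𝒮, S.Nonempty)
    (hScomp : ∀ S ∈ 𝒮, ∀ u ∈ S, ∀ v ∈ S,
      (SimpleGraph.fromEdgeSet (F : Set (Sym2 V))).Reachable u v)
    (hSdiff : ∀ S ∈ 𝒮, ∀ S' ∈ 𝒮, S ≠ S' → ∀ u ∈ S, ∀ v ∈ S',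
      ¬ (SimpleGraph.fromEdgeSet (F : Set (Sym2 V))).Reachable u v)
    (𝒜 : Finset (Finset V))
    (hdisj : ∀ A ∈ 𝒜, ∀ B ∈ 𝒜, A ≠ B → Disjoint A B) :
    (𝒮.filter fun S => ∃ U ∈ 𝒜, Separates U S ∧
        ∃ S' ∈ 𝒮, S' ≠ S ∧ Separates U S').card
      ≤ 2 * ∑ U ∈ 𝒜, ((F.filter fun e => inCut U e).card - 1) := by
  have hsub : (𝒮.filter fun S => ∃ U ∈ 𝒜, Separates U S ∧ ∃ S' ∈ 𝒮, S' ≠ S ∧ Separates U S') ⊆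
      𝒜.biUnion fun U => 𝒮.filter fun S =>
        Separates U S ∧ ∃ S' ∈ 𝒮, S' ≠ S ∧ Separates U S' := by
    intro S hS
    obtain ⟨hS, U, hU, h⟩ := Finset.mem_filter.1 hS
    exact Finset.mem_biUnion.2 ⟨U, hU, Finset.mem_filter.2 ⟨hS, h⟩⟩
  refine (Finset.card_le_card hsub).trans (Finset.card_biUnion_le.trans ?_)
  rw [Finset.mul_sum]
  refine Finset.sum_le_sum fun U _ => ?_
  have hle := card_separated_le F 𝒮 hScomp hSdiff U
  have hmono : (𝒮.filter fun S => Separates U S ∧ ∃ S' ∈ 𝒮, S' ≠ S ∧ Separates U S').card ≤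
      (𝒮.filter fun S => Separates U S).card :=
    Finset.card_le_card (Finset.monotone_filter_right 𝒮 fun S _ h => h.1)
  rcases (𝒮.filter fun S => Separates U S ∧
      ∃ S' ∈ 𝒮, S' ≠ S ∧ Separates U S').eq_empty_or_nonempty with h0 | ⟨S, hS⟩
  · simp [h0]
  · obtain ⟨hS, hsep, S', hS', hne, hsep'⟩ := Finset.mem_filter.1 hS
    have h2 : 1 < (𝒮.filter fun S => Separates U S).card :=
      Finset.one_lt_card.2 ⟨S, Finset.mem_filter.2 ⟨hS, hsep⟩, S',
        Finset.mem_filter.2 ⟨hS', hsep'⟩, hne.symm⟩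
    omega
end

section
/- Let f be a monotone submodular function on subsets of the finite set X, let c : X → ℝ assign a strictly positive cost to each element, let S ⊆ X and S* ⊆ X with c(S*) > 0, and let e ∈ X satisfy f_S(e)/c(e) ≥ f_S(x)/c(x) for all x ∈ X. Then f_S(e) ≥ (c(e)/c(S*)) · (f(S*) − f(S)). -/
/-!
Submodularity and monotonicity bound the gain of adding all of `Sstar` to `S` by the sum of the
single-element marginals `f_S(x)`, `x ∈ Sstar` (`union_sub_le_sum_marginals`). By the choice of `e`
each of these is at most `c x * (f_S(e) / c e)`, so the total gain is at most
`c(Sstar) * (f_S(e) / c e)`, and monotonicity gives `f Sstar ≤ f (S ∪ Sstar)`.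
-/

/-- Induction on `T`: submodularity is applied to `S ∪ T` and `insert a S`, whose intersection
contains `S`. -/
theorem union_sub_le_sum_marginals {X : Type*} [DecidableEq X]
    (f : Finset X → ℝ)
    (hsub : ∀ A B : Finset X, f (A ∪ B) + f (A ∩ B) ≤ f A + f B)
    (hmono : ∀ A B : Finset X, A ⊆ B → f A ≤ f B)
    (S T : Finset X) :
    f (S ∪ T) - f S ≤ ∑ x ∈ T, (f (insert x S) - f S) := by
  induction T using Finset.induction_on with
  | empty => simp
  | insert a T ha ih =>
    rw [Finset.sum_insert ha]
    have h1 := hsub (S ∪ T) (insert a S)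
    have h2 : f S ≤ f ((S ∪ T) ∩ insert a S) :=
      hmono _ _ (Finset.subset_inter Finset.subset_union_left (Finset.subset_insert a S))
    have h3 : (S ∪ T) ∪ insert a S = S ∪ insert a T := by
      ext x
      simp only [Finset.mem_union, Finset.mem_insert]
      tauto
    rw [h3] at h1
    linarith


/-- if `e` maximizes the marginal-value-to-cost ratio at the current set
`S`, then `f_S(e) ≥ (c(e)/c(S*)) · (f(S*) − f(S))`. -/
theorem greedy_ratio_bound {X : Type*} [Fintype X] [DecidableEq X]
    (f : Finset X → ℝ)
    (hsub : ∀ A B : Finset X, f (A ∪ B) + f (A ∩ B) ≤ f A + f B)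
    (hmono : ∀ A B : Finset X, A ⊆ B → f A ≤ f B)
    (c : X → ℝ) (hc : ∀ x, 0 < c x)
    (S Sstar : Finset X) (hcS : 0 < ∑ x ∈ Sstar, c x)
    (e : X)
    (hmax : ∀ x : X, (f (insert x S) - f S) / c x ≤ (f (insert e S) - f S) / c e) :
    (c e / ∑ x ∈ Sstar, c x) * (f Sstar - f S) ≤ f (insert e S) - f S := by
  have h1 := union_sub_le_sum_marginals f hsub hmono S Sstar
  have h2 : f Sstar ≤ f (S ∪ Sstar) := hmono _ _ Finset.subset_union_right
  have h3 : ∑ x ∈ Sstar, (f (insert x S) - f S) ≤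
      (∑ x ∈ Sstar, c x) * ((f (insert e S) - f S) / c e) := by
    rw [Finset.sum_mul]
    refine Finset.sum_le_sum fun x _ => ?_
    have h := (div_le_iff₀ (hc x)).mp (hmax x)
    linarith
  have h4 : f Sstar - f S ≤ (∑ x ∈ Sstar, c x) * ((f (insert e S) - f S) / c e) := by
    linarith
  have hce := hc e
  calc (c e / ∑ x ∈ Sstar, c x) * (f Sstar - f S)
      ≤ (c e / ∑ x ∈ Sstar, c x) *
          ((∑ x ∈ Sstar, c x) * ((f (insert e S) - f S) / c e)) :=
        mul_le_mul_of_nonneg_left h4 (div_pos hce hcS).le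
    _ = f (insert e S) - f S := by
        have := hcS.ne'
        have := hce.ne'
        field_simp
end

section
/- Let f be a monotone submodular function on subsets of the finite set X with f(∅) = 0, let c : X → ℝ assign a strictly positive cost to each element, and let S* ⊆ X with c(S*) > 0. Let e₁, …, e_k be distinct elements of X such that, setting S₀ = ∅ and Sᵢ = {e₁, …, eᵢ}, for each 0 ≤ i < k the element e_{i+1} maximizes the ratio f_{Sᵢ}(x)/c(x) over all x ∈ X. Then f(S_k) ≥ (1 − exp(−c(S_k)/c(S*))) · f(S*). -/
/-- One greedy step: the deficit `F - a` is at most `C` times the greedy ratio `(b - a) / w`,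
and an exponential bound on it is carried to the new deficit `F - b`. -/
theorem deficit_step {F C a b w s : ℝ} (hF : 0 ≤ F) (hC : 0 < C) (hw : 0 < w) (hab : a ≤ b)
    (hratio : F - a ≤ C * ((b - a) / w)) (ih : F - a ≤ Real.exp (-s / C) * F) :
    F - b ≤ Real.exp (-(w + s) / C) * F := by
  have hexp : Real.exp (-(w + s) / C) = Real.exp (-(w / C)) * Real.exp (-s / C) := by
    rw [← Real.exp_add]; congr 1; ring
  have hgain : w / C * (F - a) ≤ b - a := by
    calc w / C * (F - a) ≤ w / C * (C * ((b - a) / w)) := by gcongr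
      _ = b - a := by field_simp
  -- Multiplying `1 - t ≤ exp (-t)` by the deficit is only valid when the deficit is nonnegative.
  rcases le_total 0 (F - a) with hD | hD
  · calc F - b ≤ (1 - w / C) * (F - a) := by linarith
      _ ≤ Real.exp (-(w / C)) * (F - a) := by
        gcongr
        exact Real.one_sub_le_exp_neg _
      _ ≤ Real.exp (-(w / C)) * (Real.exp (-s / C) * F) := by gcongr
      _ = Real.exp (-(w + s) / C) * F := by rw [hexp, mul_assoc]
  · have : 0 ≤ Real.exp (-(w + s) / C) * F := by positivity
    linarith


/-- the greedy sequence `e₁, …, e_k` (each `e_{i+1}` maximizing the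
marginal-value-to-cost ratio at `Sᵢ = {e₁, …, eᵢ}`) satisfies
`f(S_k) ≥ (1 − exp(−c(S_k)/c(S*))) · f(S*)`. -/
theorem greedy_guarantee {X : Type*} [Fintype X] [DecidableEq X]
    (f : Finset X → ℝ)
    (hsub : ∀ A B : Finset X, f (A ∪ B) + f (A ∩ B) ≤ f A + f B)
    (hmono : ∀ A B : Finset X, A ⊆ B → f A ≤ f B)
    (h0 : f ∅ = 0)
    (c : X → ℝ) (hc : ∀ x, 0 < c x)
    (Sstar : Finset X) (hcS : 0 < ∑ x ∈ Sstar, c x)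
    (k : ℕ) (e : ℕ → X)
    (hinj : ∀ i < k, ∀ j < k, e i = e j → i = j)
    (S : ℕ → Finset X) (hS : ∀ i, S i = (Finset.range i).image e)
    (hgreedy : ∀ i < k, ∀ x : X,
      (f (insert x (S i)) - f (S i)) / c x ≤
        (f (insert (e i) (S i)) - f (S i)) / c (e i)) :
    (1 - Real.exp (-(∑ x ∈ S k, c x) / (∑ x ∈ Sstar, c x))) * f Sstar ≤ f (S k) := by
  have hF : 0 ≤ f Sstar := h0 ▸ hmono ∅ Sstar (Finset.empty_subset _)
  have hsucc : ∀ i, S (i + 1) = insert (e i) (S i) := fun i => by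
    rw [hS, hS, Finset.range_add_one, Finset.image_insert]
  have key : ∀ i ≤ k, f Sstar - f (S i) ≤
      Real.exp (-(∑ x ∈ S i, c x) / (∑ x ∈ Sstar, c x)) * f Sstar := by
    intro i
    induction i with
    | zero => intro _; simp [hS, h0]
    | succ i ih =>
      intro hi
      have hik : i < k := hi
      have hnew : e i ∉ S i := by
        rw [hS, Finset.mem_image]
        rintro ⟨j, hj, hje⟩
        rw [Finset.mem_range] at hj
        exact hj.ne (hinj j (hj.trans hik) i hik hje)
      have hratio : f Sstar - f (S i) ≤
          (∑ x ∈ Sstar, c x) * ((f (insert (e i) (S i)) - f (S i)) / c (e i)) := by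
        calc f Sstar - f (S i) ≤ f (S i ∪ Sstar) - f (S i) :=
              sub_le_sub_right (hmono _ _ Finset.subset_union_right) _
          _ ≤ ∑ x ∈ Sstar, (f (insert x (S i)) - f (S i)) :=
              union_sub_le_sum_marginals f hsub hmono _ _
          _ ≤ ∑ x ∈ Sstar, c x * ((f (insert (e i) (S i)) - f (S i)) / c (e i)) :=
              Finset.sum_le_sum fun x _ => (div_le_iff₀' (hc x)).1 (hgreedy i hik x)
          _ = _ := (Finset.sum_mul ..).symm
      rw [hsucc, Finset.sum_insert hnew]
      exact deficit_step hF hcS (hc _) (hmono _ _ (Finset.subset_insert _ _)) hratio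
        (ih hik.le)
  have := key k le_rfl
  linarith
end
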